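/- (Corollary 4, sparse linear regression, prediction.) Suppose Y = Xβ* + W ∈ ℝ^n where β* ∈ ℝ^p has support S* = supp(β*) with |S*| = s* and det(X_{*S*}ᵀX_{*S*}) > 0, and W is sub-Gaussian with parameter ρ. Then for any constants λ, ρ > 0 and any sufficiently small constant δ ∈ (0,1), there exists a constant D_{λ,δ,ρ} > 0 depending only on λ, δ, ρ such that for every D > D_{λ,δ,ρ} there exist constants M, C', C'' > 0 depending only on λ, δ, ρ, D with: E Π( |S| > (1+δ)s* | Y ) ≤ exp(−C' s* log(ep/s*)) and E Π( ‖Xβ − Xβ*‖² > M s* log(ep/s*) | Y ) ≤ exp(−C'' s* log(ep/s*)). -/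

import Mathlib

open MeasureTheory Real Matrix
open scoped ENNReal Classical

/-- Euclidean norm of a finitely-indexed real vector. -/
noncomputable def enr {ι : Type*} [Fintype ι] (v : ι → ℝ) : ℝ :=
  Real.sqrt (∑ i, v i ^ 2)

/-- Euclidean inner product. -/
noncomputable def ipr {ι : Type*} [Fintype ι] (u v : ι → ℝ) : ℝ :=
  ∑ i, u i * v i

/-- Sub-Gaussian condition (2.2): `P(|⟨W,K⟩| > t) ≤ exp(-ρ t²/2)` for every unit vector `K`. -/
def subG {ι Ω : Type*} [Fintype ι] [MeasurableSpace Ω] (P : Measure Ω) (ρ : ℝ)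
    (W : Ω → ι → ℝ) : Prop :=
  ∀ K : ι → ℝ, enr K = 1 → ∀ t : ℝ, 0 < t →
    P {ω | t < |ipr (W ω) K|} ≤ ENNReal.ofReal (Real.exp (-ρ * t ^ 2 / 2))

/-- Determinant of the Gram matrix `AᵀA`. -/
noncomputable def gramDet {N κ : Type*} [Fintype N] [Fintype κ] [DecidableEq κ]
    (A : Matrix N κ ℝ) : ℝ := (Aᵀ * A).det

/-- Generic posterior probability for a structured linear model.
`ι` indexes the models (structures), `κ i` the coordinates of the parameter of model `i`,
`A i` is the matrix of the linear operator `𝒳` of model `i`, `w i` the model-selection prior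
weight (with the Gamma-correction already cancelled against the Laplace normalizing constant),
`emb i` maps a parameter to the object the posterior statement is about, `Y` is the data,
`Sel` restricts the model index and `U` the embedded parameter. -/
noncomputable def gpostP {Θ N ι : Type*} [Fintype N] [Fintype ι]
    {κ : ι → Type*} [∀ i, Fintype (κ i)] [∀ i, DecidableEq (κ i)]
    (w : ι → ℝ) (A : (i : ι) → Matrix N (κ i) ℝ)
    (emb : (i : ι) → (κ i → ℝ) → Θ) (lam : ℝ) (Y : N → ℝ)
    (Sel : Set ι) (U : Set Θ) : ℝ :=
  (∑ i : ι, (if i ∈ Sel then w i else 0) * Real.sqrt (gramDet (A i)) *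
      (lam / Real.sqrt π) ^ Fintype.card (κ i) *
      ∫ Q in {Q : κ i → ℝ | emb i Q ∈ U},
        Real.exp (-(1/2) * (enr fun t => Y t - (A i).mulVec Q t) ^ 2
          - lam * enr ((A i).mulVec Q))) /
  (∑ i : ι, w i * Real.sqrt (gramDet (A i)) *
      (lam / Real.sqrt π) ^ Fintype.card (κ i) *
      ∫ Q : κ i → ℝ,
        Real.exp (-(1/2) * (enr fun t => Y t - (A i).mulVec Q t) ^ 2
          - lam * enr ((A i).mulVec Q)))

/-- The submatrix `X_{*S}` of the columns of `X` indexed by `S`. -/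
noncomputable def colSub {n p : ℕ} (X : Matrix (Fin n) (Fin p) ℝ) (S : Finset (Fin p)) :
    Matrix (Fin n) ↥S ℝ := fun i j => X i j

/-- The coefficient vector `β` with `β_S` on `S` and `β_{S^c} = 0`. -/
noncomputable def sparseVec {p : ℕ} (S : Finset (Fin p)) (Q : ↥S → ℝ) : Fin p → ℝ :=
  fun j => if h : j ∈ S then Q ⟨j, h⟩ else 0

/-- The posterior distribution of the sparse-regression prior: `s` is sampled with weight
proportional to `(Γ(s)/Γ(s/2)) exp(-2Ds log(ep/s))` on `[p]`, `S` uniformly from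
`𝒵̄_s = {S : |S| = s, det(X_{*S}ᵀX_{*S}) > 0}`, and `β_S` from the elliptical Laplace
density `∝ exp(-λ‖X_{*S}β_S‖)` with `β_{S^c} = 0`; the Gaussian pseudo-likelihood
`∝ exp(-½‖Y - Xβ‖²)` is used.  `SS` restricts the selected support `S` and `U` restricts
the coefficient vector `β`.  (The Gamma correction factor has been cancelled against the
Laplace normalizing constant.) -/
noncomputable def slrPost (n p : ℕ) (X : Matrix (Fin n) (Fin p) ℝ) (D lam : ℝ)
    (Y : Fin n → ℝ) (SS : Set (Finset (Fin p))) (U : Set (Fin p → ℝ)) : ℝ :=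
  gpostP
    (fun S : Finset (Fin p) =>
      (if S.Nonempty ∧ 0 < gramDet (colSub X S) then 1 else 0) *
        Real.exp (-2 * D * S.card * Real.log (Real.exp 1 * p / S.card)) *
        ((Finset.univ.filter fun S' : Finset (Fin p) =>
            S'.card = S.card ∧ 0 < gramDet (colSub X S')).card : ℝ)⁻¹)
    (fun S => colSub X S) (fun S Q => sparseVec S Q) lam Y SS U


lemma slr_enr_eq {ι : Type*} [Fintype ι] (v : ι → ℝ) : enr v = ‖WithLp.toLp 2 v‖ := by
  simp [enr, EuclideanSpace.norm_eq]

lemma slr_enr_nonneg {ι : Type*} [Fintype ι] (v : ι → ℝ) : 0 ≤ enr v := Real.sqrt_nonneg _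

lemma slr_enr_sq {ι : Type*} [Fintype ι] (v : ι → ℝ) : enr v ^ 2 = v ⬝ᵥ v := by
  rw [enr, Real.sq_sqrt (Finset.sum_nonneg fun i _ => sq_nonneg _)]
  simp [dotProduct, sq]

lemma slr_enr_cont {ι : Type*} [Fintype ι] : Continuous (enr : (ι → ℝ) → ℝ) := by
  unfold enr; fun_prop

lemma slr_enr_add_le {ι : Type*} [Fintype ι] (u v : ι → ℝ) : enr (u + v) ≤ enr u + enr v := by
  simp only [slr_enr_eq, WithLp.toLp_add]
  exact norm_add_le _ _

lemma slr_net {E : Type*} [NormedAddCommGroup E] [InnerProductSpace ℝ E] [FiniteDimensional ℝ E]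
    (V : Submodule ℝ E) :
    ∃ T : Finset E, T.card ≤ 5 ^ Module.finrank ℝ V ∧ (∀ u ∈ T, ‖u‖ = 1) ∧
      ∀ (w : E) (t : ℝ), 0 ≤ t → (∀ u ∈ T, |inner ℝ w u| ≤ t) →
        ∀ v ∈ V, inner ℝ w v ≤ 2 * t * ‖v‖ := by
  let good : Finset V → Prop := fun s => (∀ c ∈ s, ‖c‖ = 2) ∧
    (∀ c ∈ s, ∀ d ∈ s, c ≠ d → 1 ≤ ‖c - d‖)
  have hcard : ∀ s, good s → s.card ≤ 5 ^ Module.finrank ℝ V := fun s hs =>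
    Besicovitch.card_le_of_separated s (fun c hc => (hs.1 c hc).le) hs.2
  let A : Set ℕ := {k | ∃ s, good s ∧ s.card = k}
  have hne : A.Nonempty := ⟨0, ∅, ⟨by simp, by simp⟩, by simp⟩
  have hbdd : BddAbove A := ⟨5 ^ Module.finrank ℝ V, by rintro k ⟨s, hs, rfl⟩; exact hcard s hs⟩
  obtain ⟨s, hs, hsk⟩ := Nat.sSup_mem hne hbdd
  have hmax : ∀ s', good s' → s'.card ≤ s.card := by
    intro s' hs'
    rw [hsk]; exact le_csSup hbdd ⟨s', hs', rfl⟩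
  have hnet : ∀ x : V, ‖x‖ = 2 → ∃ c ∈ s, ‖x - c‖ < 1 := by
    intro x hx
    by_contra! hcon
    have hxs : x ∉ s := by
      intro h
      have := hcon x h
      simp at this
      linarith
    have := hmax (insert x s) ⟨by
        intro c hc
        rcases Finset.mem_insert.1 hc with rfl | hc
        · exact hx
        · exact hs.1 c hc, by
        intro c hc d hd hcd
        rcases Finset.mem_insert.1 hc with rfl | hc' <;> rcases Finset.mem_insert.1 hd with rfl | hd'
        · exact absurd rfl hcd
        · exact hcon d hd'
        · rw [norm_sub_rev]; exact hcon c hc'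
        · exact hs.2 c hc' d hd' hcd⟩
    rw [Finset.card_insert_of_notMem hxs] at this
    omega
  refine ⟨s.image fun c : V => (1/2 : ℝ) • (c : E), Finset.card_image_le.trans (hcard s hs), ?_, ?_⟩
  · intro u hu
    obtain ⟨c, hc, rfl⟩ := Finset.mem_image.1 hu
    have := hs.1 c hc
    rw [Submodule.coe_norm] at this
    rw [norm_smul, this]; norm_num
  · intro w t ht hT v hv
    have hproj : ∀ z : V, inner ℝ w (z : E) = inner ℝ (V.orthogonalProjectionOnto w) z := by
      intro z
      rw [Submodule.coe_inner]
      have := Submodule.inner_orthogonalProjectionOnto_eq_of_mem_right (K := V) z w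
      rw [Submodule.coe_inner] at this
      linarith [real_inner_comm w (z : E), real_inner_comm (V.orthogonalProjectionOnto w : E) (z : E)]
    set q := V.orthogonalProjectionOnto w with hq
    have hq2 : ‖q‖ ≤ 2 * t := by
      by_cases h0 : q = 0
      · rw [h0]; simpa using ht
      have hqpos : 0 < ‖q‖ := norm_pos_iff.2 h0
      obtain ⟨c, hc, hxc⟩ := hnet ((2 / ‖q‖) • q) (by
        rw [norm_smul, Real.norm_of_nonneg (by positivity)]; field_simp)
      have h1 : inner ℝ q ((2 / ‖q‖) • q) = 2 * ‖q‖ := by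
        rw [inner_smul_right, real_inner_self_eq_norm_sq]; field_simp
      have h2 : inner ℝ q ((2 / ‖q‖) • q - c) ≤ ‖q‖ :=
        (real_inner_le_norm _ _).trans (by nlinarith)
      rw [inner_sub_right, h1] at h2
      have h3 := hT _ (Finset.mem_image_of_mem _ hc)
      rw [inner_smul_right, hproj] at h3
      have := (abs_le.1 h3).2
      linarith
    have := hproj ⟨v, hv⟩
    simp only at this
    rw [this]
    refine (real_inner_le_norm _ _).trans ?_
    exact mul_le_mul_of_nonneg_right hq2 (norm_nonneg _)

section gauss
open scoped MatrixOrder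

lemma slr_factor {N κ : Type*} [Fintype N] [Fintype κ] [DecidableEq κ] (A : Matrix N κ ℝ) :
    ∃ B : Matrix κ κ ℝ, Aᵀ * A = Bᵀ * B := by
  have h : (Aᵀ * A).PosSemidef := by
    simpa using Matrix.posSemidef_conjTranspose_mul_self A
  obtain ⟨B, hB⟩ := (CStarAlgebra.nonneg_iff_eq_star_mul_self (a := Aᵀ * A)).1 h.nonneg
  exact ⟨B, by simpa [Matrix.star_eq_conjTranspose] using hB⟩
end gauss

lemma slr_enr_mulVec {N κ : Type*} [Fintype N] [Fintype κ] (A : Matrix N κ ℝ)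
    (Q : κ → ℝ) : enr (A *ᵥ Q) ^ 2 = Q ⬝ᵥ ((Aᵀ * A) *ᵥ Q) := by
  rw [slr_enr_sq, ← Matrix.mulVec_mulVec, Matrix.dotProduct_mulVec Q, Matrix.vecMul_transpose]

lemma slr_gauss_base {κ : Type*} [Fintype κ] (b : ℝ) (hb : 0 < b) :
    Integrable (fun Q : κ → ℝ => Real.exp (-b * enr Q ^ 2)) ∧
    ∫ Q : κ → ℝ, Real.exp (-b * enr Q ^ 2) = √(π / b) ^ Fintype.card κ := by
  have h : (fun Q : κ → ℝ => Real.exp (-b * enr Q ^ 2)) =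
      fun Q => ∏ i, Real.exp (-b * Q i ^ 2) := by
    funext Q
    rw [enr, Real.sq_sqrt (Finset.sum_nonneg fun i _ => sq_nonneg _), Finset.mul_sum, Real.exp_sum]
  rw [h]
  constructor
  · exact Integrable.fintype_prod (f := fun _ (x : ℝ) => Real.exp (-b * x ^ 2))
      fun i => integrable_exp_neg_mul_sq hb
  · rw [integral_fintype_prod_volume_eq_pow (fun x : ℝ => Real.exp (-b * x ^ 2)),
      integral_gaussian]

lemma slr_gauss {N κ : Type*} [Fintype N] [Fintype κ] [DecidableEq κ] (A : Matrix N κ ℝ)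
    (hA : 0 < gramDet A) (b : ℝ) (hb : 0 < b) :
    Integrable (fun Q : κ → ℝ => Real.exp (-b * enr (A *ᵥ Q) ^ 2)) ∧
    Real.sqrt (gramDet A) * ∫ Q : κ → ℝ, Real.exp (-b * enr (A *ᵥ Q) ^ 2)
      = √(π / b) ^ Fintype.card κ := by
  obtain ⟨B, hB⟩ := slr_factor A
  have hdet : gramDet A = B.det ^ 2 := by
    rw [gramDet, hB, Matrix.det_mul, Matrix.det_transpose, sq]
  have hB0 : B.det ≠ 0 := by
    intro h; rw [hdet, h] at hA; simp at hA
  have hs : Real.sqrt (gramDet A) = |B.det| := by rw [hdet, Real.sqrt_sq_eq_abs]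
  have he : (fun Q : κ → ℝ => Real.exp (-b * enr (A *ᵥ Q) ^ 2)) =
      (fun Q : κ → ℝ => Real.exp (-b * enr Q ^ 2)) ∘ (Matrix.toLin' B) := by
    funext Q
    simp only [Function.comp, Matrix.toLin'_apply]
    rw [slr_enr_mulVec, slr_enr_mulVec, hB]
  obtain ⟨h1, h2⟩ := slr_gauss_base (κ := κ) b hb
  have hm := Real.map_matrix_volume_pi_eq_smul_volume_pi hB0
  have hmeas : Measurable (Matrix.toLin' B) := (Matrix.toLin' B).continuous_of_finiteDimensional.measurable
  have h1' : Integrable (fun Q : κ → ℝ => Real.exp (-b * enr Q ^ 2))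
      (Measure.map (Matrix.toLin' B) volume) := by
    rw [hm]; exact h1.smul_measure ENNReal.ofReal_ne_top
  constructor
  · rw [he]
    exact h1'.comp_measurable hmeas
  · have := integral_map hmeas.aemeasurable h1'.aestronglyMeasurable
    rw [hm, integral_smul_measure, h2] at this
    rw [he, Function.comp_def]
    rw [← this, hs, ENNReal.toReal_ofReal (abs_nonneg _), abs_inv, smul_eq_mul, ← mul_assoc,
      mul_inv_cancel₀ (abs_ne_zero.2 hB0), one_mul]

lemma slr_gauss_shift {N κ : Type*} [Fintype N] [Fintype κ] [DecidableEq κ] (A : Matrix N κ ℝ)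
    (hA : 0 < gramDet A) (b : ℝ) (hb : 0 < b) (y : N → ℝ) :
    Integrable (fun Q : κ → ℝ => Real.exp (-b * enr (A *ᵥ Q - y) ^ 2)) ∧
    Real.sqrt (gramDet A) * ∫ Q : κ → ℝ, Real.exp (-b * enr (A *ᵥ Q - y) ^ 2)
      ≤ √(π / b) ^ Fintype.card κ := by
  obtain ⟨h1, h2⟩ := slr_gauss A hA b hb
  let Q0 : κ → ℝ := (Aᵀ * A)⁻¹ *ᵥ (Aᵀ *ᵥ y)
  have hQ0 : (Aᵀ * A) *ᵥ Q0 = Aᵀ *ᵥ y := by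
    change (Aᵀ * A) *ᵥ ((Aᵀ * A)⁻¹ *ᵥ (Aᵀ *ᵥ y)) = _
    rw [Matrix.mulVec_mulVec, Matrix.mul_nonsing_inv _ (isUnit_iff_ne_zero.2 hA.ne'), Matrix.one_mulVec]
  have horth : ∀ R : κ → ℝ, (A *ᵥ R) ⬝ᵥ (A *ᵥ Q0 - y) = 0 := by
    intro R
    rw [dotProduct_comm, Matrix.dotProduct_mulVec, ← Matrix.mulVec_transpose, Matrix.mulVec_sub,
      Matrix.mulVec_mulVec, hQ0, sub_self, zero_dotProduct]
  have hle : ∀ Q, enr (A *ᵥ (Q - Q0)) ^ 2 ≤ enr (A *ᵥ Q - y) ^ 2 := by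
    intro Q
    have : A *ᵥ Q - y = A *ᵥ (Q - Q0) + (A *ᵥ Q0 - y) := by
      rw [Matrix.mulVec_sub]; abel
    have h3 := horth (Q - Q0)
    have h4 : 0 ≤ enr (A *ᵥ Q0 - y) ^ 2 := sq_nonneg _
    rw [this, slr_enr_sq, slr_enr_sq]
    rw [slr_enr_sq] at h4
    rw [add_dotProduct, dotProduct_add, dotProduct_add, h3, dotProduct_comm (A *ᵥ Q0 - y), h3]
    linarith
  have hint : Integrable (fun Q : κ → ℝ => Real.exp (-b * enr (A *ᵥ (Q - Q0)) ^ 2)) :=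
    h1.comp_sub_right Q0
  have hI : Integrable (fun Q : κ → ℝ => Real.exp (-b * enr (A *ᵥ Q - y) ^ 2)) := by
    refine hint.mono' ?_ (Filter.Eventually.of_forall fun Q => ?_)
    · have := slr_enr_cont (ι := N)
      have hc : Continuous fun Q : κ → ℝ => enr (A *ᵥ Q - y) := this.comp (by fun_prop)
      exact Continuous.aestronglyMeasurable (by fun_prop)
    · rw [Real.norm_of_nonneg (Real.exp_nonneg _)]
      apply Real.exp_le_exp.2
      nlinarith [hle Q]
  refine ⟨hI, ?_⟩
  rw [← h2]
  refine mul_le_mul_of_nonneg_left ?_ (Real.sqrt_nonneg _)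
  rw [← integral_sub_right_eq_self (fun Q : κ → ℝ => Real.exp (-b * enr (A *ᵥ Q) ^ 2)) Q0]
  refine integral_mono hI hint fun Q => ?_
  apply Real.exp_le_exp.2
  nlinarith [hle Q]

noncomputable def slr_g (p s : ℕ) : ℝ := (s : ℝ) * Real.log (Real.exp 1 * p / s)

lemma slr_log_ge {p s : ℕ} (h1 : 1 ≤ s) (h2 : s ≤ p) :
    1 ≤ Real.log (Real.exp 1 * p / s) := by
  have hs : (0 : ℝ) < s := by exact_mod_cast h1
  have hp : (s : ℝ) ≤ p := by exact_mod_cast h2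
  rw [Real.le_log_iff_exp_le (div_pos (mul_pos (Real.exp_pos 1) (lt_of_lt_of_le hs hp)) hs), le_div_iff₀ hs]
  exact mul_le_mul_of_nonneg_left hp (Real.exp_nonneg _)

lemma slr_g_ge {p s : ℕ} (h1 : 1 ≤ s) (h2 : s ≤ p) : (s : ℝ) ≤ slr_g p s := by
  have := slr_log_ge h1 h2
  have hs : (0 : ℝ) ≤ s := by positivity
  unfold slr_g; nlinarith

lemma slr_choose {p s : ℕ} (h1 : 1 ≤ s) (h2 : s ≤ p) :
    (p.choose s : ℝ) ≤ Real.exp (slr_g p s) := by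
  have hs : (0 : ℝ) < s := by exact_mod_cast h1
  have hp : (0 : ℝ) < p := by exact_mod_cast (h1.trans h2)
  have e1 : Real.exp (slr_g p s) = (Real.exp 1 * p / s) ^ s := by
    rw [slr_g, Real.exp_nat_mul, Real.exp_log (by positivity)]
  have e2 := Nat.choose_le_pow_div (α := ℝ) s p
  have e3 := Real.pow_div_factorial_le_exp (x := (s : ℝ)) hs.le s
  have hf : (0 : ℝ) < s.factorial := by exact_mod_cast s.factorial_pos
  rw [e1]
  refine e2.trans ?_
  rw [div_pow, mul_pow, ← Real.exp_nat_mul, mul_one]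
  rw [div_le_iff₀ hf] at e3
  rw [div_le_div_iff₀ hf (by positivity)]
  nlinarith [pow_pos hp s]

lemma slr_gap {p s t : ℕ} {δ : ℝ} (hδ : 0 < δ) (h1 : 1 ≤ t) (h2 : s ≤ p)
    (h : (1 + δ) * t < s) :
    slr_g p t ≤ (1 + Real.log (1 + δ)) / (1 + δ) * slr_g p s := by
  have ht : (0 : ℝ) < t := by exact_mod_cast h1
  have hs : (0 : ℝ) < s := lt_of_le_of_lt (by positivity) h
  have hs1 : 1 ≤ s := by exact_mod_cast hs
  have hl := slr_log_ge hs1 h2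
  have hp : (0 : ℝ) < p := by exact_mod_cast (hs1.trans h2)
  set ℓ := Real.log (Real.exp 1 * p / s) with hℓ
  set r : ℝ := s / t with hr
  have hrs : (s : ℝ) = r * t := by rw [hr]; field_simp
  have hr0 : 1 + δ < r := by rw [hr, lt_div_iff₀ ht]; exact h
  have e1 : Real.log (Real.exp 1 * p / t) = ℓ + Real.log r := by
    rw [hℓ, hr, ← Real.log_mul (by positivity) (by positivity)]
    congr 1; field_simp
  have e2 : Real.log r ≤ Real.log (1 + δ) + (r / (1 + δ) - 1) := by
    have : Real.log r = Real.log (1 + δ) + Real.log (r / (1 + δ)) := by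
      have h0 : (1 + δ) ≠ 0 := by positivity
      have h3 : r / (1 + δ) ≠ 0 := by apply div_ne_zero _ h0; linarith
      rw [← Real.log_mul h0 h3]
      congr 1; field_simp
    rw [this]
    have := Real.log_le_sub_one_of_pos (x := r / (1 + δ)) (by apply div_pos <;> linarith)
    linarith
  have hlog : 0 < Real.log (1 + δ) := Real.log_pos (by linarith)
  set q : ℝ := r / (1 + δ) with hq
  have hq1 : 1 ≤ q := by rw [hq, le_div_iff₀ (by linarith)]; linarith
  have hlr : 0 ≤ Real.log r := Real.log_nonneg (by linarith)
  have e3 : 1 + Real.log r ≤ q * (1 + Real.log (1 + δ)) := by nlinarith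
  have e4 : (1 + Real.log (1 + δ)) / (1 + δ) * slr_g p s = t * (q * (1 + Real.log (1 + δ)) * ℓ) := by
    rw [slr_g, ← hℓ, hrs, hq]; field_simp
  rw [e4, slr_g, e1]
  refine mul_le_mul_of_nonneg_left ?_ ht.le
  nlinarith

lemma slr_sum (p : ℕ) :
    ∑ S : Finset (Fin p), (if S.Nonempty then Real.exp (-2 * slr_g p S.card) else 0) ≤ 1 := by
  have h := Finset.sum_powerset_apply_card
    (fun m => if m = 0 then (0 : ℝ) else Real.exp (-2 * slr_g p m)) (x := (Finset.univ : Finset (Fin p)))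
  rw [Finset.powerset_univ, Finset.card_univ, Fintype.card_fin] at h
  have h' : ∑ S : Finset (Fin p), (if S.Nonempty then Real.exp (-2 * slr_g p S.card) else 0) =
      ∑ S : Finset (Fin p), (if S.card = 0 then (0 : ℝ) else Real.exp (-2 * slr_g p S.card)) := by
    refine Finset.sum_congr rfl fun S _ => ?_
    by_cases hS : S.Nonempty
    · simp [hS, hS.ne_empty]
    · simp [Finset.not_nonempty_iff_eq_empty.1 hS]
  rw [h', h, Finset.sum_range_succ']
  have e0 : Real.exp (-1) ≤ 1 / 2 := by
    rw [Real.exp_neg, ← one_div]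
    apply one_div_le_one_div_of_le (by norm_num)
    linarith [Real.add_one_le_exp 1]
  have hterm : ∀ m ∈ Finset.range p, p.choose (m + 1) •
      (if m + 1 = 0 then (0 : ℝ) else Real.exp (-2 * slr_g p (m + 1))) ≤ (1 / 2) ^ (m + 1) := by
    intro m hm
    have hm' : m + 1 ≤ p := Finset.mem_range.1 hm
    rw [if_neg (by omega), nsmul_eq_mul]
    have c1 := slr_choose (Nat.le_add_left 1 m) hm'
    have c2 := slr_g_ge (Nat.le_add_left 1 m) hm'
    calc _ ≤ Real.exp (slr_g p (m + 1)) * Real.exp (-2 * slr_g p (m + 1)) :=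
          mul_le_mul_of_nonneg_right c1 (Real.exp_nonneg _)
      _ = Real.exp (-slr_g p (m + 1)) := by rw [← Real.exp_add]; congr 1; ring
      _ ≤ Real.exp (((m + 1 : ℕ) : ℝ) * (-1)) := Real.exp_le_exp.2 (by linarith)
      _ = Real.exp (-1) ^ (m + 1) := Real.exp_nat_mul _ _
      _ ≤ _ := pow_le_pow_left₀ (Real.exp_nonneg _) e0 _
  have hgeo : ∀ k : ℕ, ∑ m ∈ Finset.range k, (1 / 2 : ℝ) ^ (m + 1) = 1 - (1 / 2) ^ k := by
    intro k
    induction k with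
    | zero => simp
    | succ k ih => rw [Finset.sum_range_succ, ih]; ring
  have := Finset.sum_le_sum hterm
  rw [hgeo] at this
  have hp : (0 : ℝ) < (1 / 2) ^ p := by positivity
  simp only [if_true, smul_zero, add_zero]
  linarith

noncomputable def slr_t (p : ℕ) (ρ L : ℝ) (S : Finset (Fin p)) : ℝ :=
  √(8 / ρ * (slr_g p S.card + L))

lemma slr_event {n p : ℕ} (X : Matrix (Fin n) (Fin p) ℝ) (βs : Fin p → ℝ) (ρ : ℝ) (hρ : 0 < ρ)
    (Ss : Finset (Fin p)) (hSs : ∀ j, j ∉ Ss → βs j = 0) (hs1 : 1 ≤ Ss.card)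
    {Ω : Type} [MeasurableSpace Ω] (P : Measure Ω) (W : Ω → Fin n → ℝ) (hW : subG P ρ W) :
    P {ω | ∃ S : Finset (Fin p), S.Nonempty ∧ ∃ Q : S → ℝ,
      2 * slr_t p ρ (slr_g p Ss.card) S * enr (colSub X S *ᵥ Q - X *ᵥ βs) <
        ipr (W ω) (colSub X S *ᵥ Q - X *ᵥ βs)} ≤ ENNReal.ofReal (Real.exp (-2 * slr_g p Ss.card)) := by
  set L := slr_g p Ss.card with hL
  have hSsp : Ss.card ≤ p := by simpa using Finset.card_le_univ Ss
  have hL1 := slr_g_ge hs1 hSsp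
  let col : Fin p → EuclideanSpace ℝ (Fin n) := fun j => WithLp.toLp 2 (fun i => X i j)
  let V : Finset (Fin p) → Submodule ℝ (EuclideanSpace ℝ (Fin n)) := fun S =>
    Submodule.span ℝ (((S ∪ Ss).image col : Finset _) : Set (EuclideanSpace ℝ (Fin n)))
  choose T hT1 hT2 hT3 using fun S => slr_net (V S)
  have hrank : ∀ S, Module.finrank ℝ (V S) ≤ S.card + Ss.card := fun S =>
    (finrank_span_finset_le_card _).trans (Finset.card_image_le.trans (Finset.card_union_le _ _))
  have hmem : ∀ (S : Finset (Fin p)) (Q : S → ℝ),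
      WithLp.toLp 2 (colSub X S *ᵥ Q - X *ᵥ βs) ∈ V S := by
    intro S Q
    have e1 : WithLp.toLp 2 (colSub X S *ᵥ Q) = ∑ j : S, Q j • col j := by
      ext i
      simp [col, Matrix.mulVec, dotProduct, colSub, mul_comm]
    have e2 : WithLp.toLp 2 (X *ᵥ βs) = ∑ j ∈ Ss, βs j • col j := by
      ext i
      simp only [Matrix.mulVec, dotProduct, col, WithLp.ofLp_sum, WithLp.ofLp_smul, Finset.sum_apply,
        Pi.smul_apply, smul_eq_mul]
      rw [← Finset.sum_subset (Finset.subset_univ Ss)]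
      · exact Finset.sum_congr rfl fun j _ => mul_comm _ _
      · intro j _ hj; rw [hSs j hj, mul_zero]
    rw [WithLp.toLp_sub, e1, e2]
    refine Submodule.sub_mem _ (Submodule.sum_mem _ fun j _ => ?_) (Submodule.sum_mem _ fun j hj => ?_)
    · exact Submodule.smul_mem _ _ (Submodule.subset_span (by
        exact Finset.mem_coe.2 (Finset.mem_image_of_mem _ (Finset.mem_union_left _ j.2))))
    · exact Submodule.smul_mem _ _ (Submodule.subset_span (by
        exact Finset.mem_coe.2 (Finset.mem_image_of_mem _ (Finset.mem_union_right _ hj))))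
  have hin : ∀ u v : Fin n → ℝ, inner ℝ (WithLp.toLp 2 u : EuclideanSpace ℝ (Fin n)) (WithLp.toLp 2 v) = ipr u v := by
    intro u v
    simp [ipr, PiLp.inner_apply, mul_comm]
  have hsub : {ω | ∃ S : Finset (Fin p), S.Nonempty ∧ ∃ Q : S → ℝ,
      2 * slr_t p ρ L S * enr (colSub X S *ᵥ Q - X *ᵥ βs) <
        ipr (W ω) (colSub X S *ᵥ Q - X *ᵥ βs)} ⊆
      ⋃ S ∈ Finset.univ.filter (fun S : Finset (Fin p) => S.Nonempty), ⋃ u ∈ T S,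
        {ω | slr_t p ρ L S < |ipr (W ω) (WithLp.ofLp u)|} := by
    rintro ω ⟨S, hS, Q, hQ⟩
    by_contra hcon
    simp only [Set.mem_iUnion, not_exists, Finset.mem_filter, Finset.mem_univ, true_and,
      Set.mem_ofPred_eq, not_lt] at hcon
    have := hT3 S (WithLp.toLp 2 (W ω)) (slr_t p ρ L S) (Real.sqrt_nonneg _) (by
      intro u hu
      have := hcon S hS u hu
      rwa [← hin] at this) _ (hmem S Q)
    rw [hin, ← slr_enr_eq] at this
    linarith
  refine (measure_mono hsub).trans ?_
  refine (measure_biUnion_finset_le _ _).trans ?_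
  have hterm : ∀ S ∈ Finset.univ.filter (fun S : Finset (Fin p) => S.Nonempty),
      P (⋃ u ∈ T S, {ω | slr_t p ρ L S < |ipr (W ω) (WithLp.ofLp u)|}) ≤
        ENNReal.ofReal (Real.exp (-2 * L) * Real.exp (-2 * slr_g p S.card)) := by
    intro S hS
    have hS1 : 1 ≤ S.card := Finset.card_pos.2 (Finset.mem_filter.1 hS).2
    have hSp : S.card ≤ p := by simpa using Finset.card_le_univ S
    have hg := slr_g_ge hS1 hSp
    have hS1' : (1 : ℝ) ≤ S.card := by exact_mod_cast hS1
    have hs1' : (1 : ℝ) ≤ Ss.card := by exact_mod_cast hs1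
    have hpos : 0 < 8 / ρ * (slr_g p S.card + L) := by
      have : 0 < slr_g p S.card + L := by linarith
      positivity
    refine (measure_biUnion_finset_le _ _).trans ?_
    have : ∀ u ∈ T S, P {ω | slr_t p ρ L S < |ipr (W ω) (WithLp.ofLp u)|} ≤
        ENNReal.ofReal (Real.exp (-4 * (slr_g p S.card + L))) := by
      intro u hu
      refine (hW (WithLp.ofLp u) (by rw [slr_enr_eq]; exact hT2 S u hu) (slr_t p ρ L S) (Real.sqrt_pos.2 hpos)).trans ?_
      apply le_of_eq
      congr 2
      have hsq : slr_t p ρ L S ^ 2 = 8 / ρ * (slr_g p S.card + L) := Real.sq_sqrt hpos.le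
      rw [hsq]
      field_simp; ring
    refine (Finset.sum_le_sum this).trans ?_
    rw [Finset.sum_const, nsmul_eq_mul, ← ENNReal.ofReal_natCast, ← ENNReal.ofReal_mul (by positivity)]
    apply ENNReal.ofReal_le_ofReal
    have h5 : (5 : ℝ) ≤ Real.exp 2 := by
      have h := Real.exp_one_gt_d9
      have : Real.exp 2 = Real.exp 1 * Real.exp 1 := by rw [← Real.exp_add]; norm_num
      rw [this]; nlinarith
    have hc : ((T S).card : ℝ) ≤ Real.exp (2 * (slr_g p S.card + L)) := by
      calc ((T S).card : ℝ) ≤ (5 : ℝ) ^ Module.finrank ℝ (V S) := by exact_mod_cast hT1 S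
        _ ≤ 5 ^ (S.card + Ss.card) := pow_le_pow_right₀ (by norm_num) (hrank S)
        _ ≤ Real.exp 2 ^ (S.card + Ss.card) := pow_le_pow_left₀ (by norm_num) h5 _
        _ = Real.exp (((S.card + Ss.card : ℕ) : ℝ) * 2) := (Real.exp_nat_mul _ _).symm
        _ ≤ _ := by
          apply Real.exp_le_exp.2
          push_cast; linarith
    calc _ ≤ Real.exp (2 * (slr_g p S.card + L)) * Real.exp (-4 * (slr_g p S.card + L)) :=
          mul_le_mul_of_nonneg_right hc (Real.exp_nonneg _)
      _ = _ := by rw [← Real.exp_add, ← Real.exp_add]; congr 1; ring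
  refine (Finset.sum_le_sum hterm).trans ?_
  rw [← ENNReal.ofReal_sum_of_nonneg (fun _ _ => by positivity)]
  apply ENNReal.ofReal_le_ofReal
  rw [← Finset.mul_sum, Finset.sum_filter]
  have := slr_sum p
  nlinarith [Real.exp_pos (-2 * L)]

noncomputable def slr_f {N κ : Type*} [Fintype N] [Fintype κ] (A : Matrix N κ ℝ) (lam : ℝ)
    (Y : N → ℝ) (Q : κ → ℝ) : ℝ :=
  Real.exp (-(1/2) * (enr fun t => Y t - A.mulVec Q t) ^ 2 - lam * enr (A.mulVec Q))

lemma slr_ipr {N : Type*} [Fintype N] (u v : N → ℝ) : ipr u v = u ⬝ᵥ v := rfl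

lemma slr_f_pos {N κ : Type*} [Fintype N] [Fintype κ] (A : Matrix N κ ℝ) (lam : ℝ)
    (Y : N → ℝ) (Q : κ → ℝ) : 0 < slr_f A lam Y Q := Real.exp_pos _

/-- The exponent around `y0`. -/
lemma slr_expand {N : Type*} [Fintype N] (W y0 z : N → ℝ) :
    (enr fun t => (y0 t + W t) - z t) ^ 2 =
      enr W ^ 2 - 2 * ipr W (z - y0) + enr (z - y0) ^ 2 := by
  have : (fun t => (y0 t + W t) - z t) = W - (z - y0) := by
    funext t; simp; ring
  rw [this]
  generalize z - y0 = v
  rw [slr_enr_sq, slr_enr_sq, slr_enr_sq, slr_ipr, sub_dotProduct, dotProduct_sub,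
    dotProduct_sub, dotProduct_comm v W]
  ring

lemma slr_f_int {N κ : Type*} [Fintype N] [Fintype κ] [DecidableEq κ] (A : Matrix N κ ℝ)
    (hA : 0 < gramDet A) (lam : ℝ) (hl : 0 < lam) (Y : N → ℝ) : Integrable (slr_f A lam Y) := by
  refine (slr_gauss_shift A hA (1/2) (by norm_num) Y).1.mono' ?_
    (Filter.Eventually.of_forall fun Q => ?_)
  · have := slr_enr_cont (ι := N)
    have hc : Continuous fun Q : κ → ℝ => enr fun t => Y t - A.mulVec Q t :=
      this.comp (continuous_const.sub (by fun_prop : Continuous fun Q : κ → ℝ => A *ᵥ Q))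
    have hc2 : Continuous fun Q : κ → ℝ => enr (A *ᵥ Q) := this.comp (by fun_prop)
    unfold slr_f
    exact Continuous.aestronglyMeasurable (by fun_prop)
  · rw [Real.norm_of_nonneg (slr_f_pos _ _ _ _).le]
    apply Real.exp_le_exp.2
    have e : (enr fun t => Y t - A.mulVec Q t) ^ 2 = enr (A *ᵥ Q - Y) ^ 2 := by
      unfold enr; congr 2; refine Finset.sum_congr rfl fun i _ => ?_
      simp only [Pi.sub_apply]; ring
    rw [e]
    have := mul_nonneg hl.le (slr_enr_nonneg (A *ᵥ Q))
    linarith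

lemma slr_lower {N κ : Type*} [Fintype N] [Fintype κ] [DecidableEq κ] (A : Matrix N κ ℝ)
    (hA : 0 < gramDet A) (lam : ℝ) (hl : 0 < lam) (W : N → ℝ) (Q0 : κ → ℝ) :
    lam ^ Fintype.card κ * Real.exp (-(1/2) * enr W ^ 2 - lam * enr (A *ᵥ Q0) - lam ^ 2 / 2) ≤
    Real.sqrt (gramDet A) * (lam / Real.sqrt π) ^ Fintype.card κ *
      ∫ Q, slr_f A lam (fun t => (A *ᵥ Q0) t + W t) Q := by
  set Y : N → ℝ := fun t => (A *ᵥ Q0) t + W t with hY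
  set c : ℝ := Real.exp (-(1/2) * enr W ^ 2 - lam * enr (A *ᵥ Q0) - lam ^ 2 / 2) with hc
  have hI := slr_f_int A hA lam hl Y
  obtain ⟨hg, hg2⟩ := slr_gauss A hA 1 one_pos
  have hpt : ∀ h : κ → ℝ, c * (Real.exp (ipr W (A *ᵥ h)) * Real.exp (-1 * enr (A *ᵥ h) ^ 2)) ≤
      slr_f A lam Y (Q0 + h) := by
    intro h
    rw [hc, ← Real.exp_add, ← Real.exp_add, slr_f, hY]
    apply Real.exp_le_exp.2
    rw [slr_expand]
    have e : A *ᵥ (Q0 + h) - A *ᵥ Q0 = A *ᵥ h := by rw [Matrix.mulVec_add]; abel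
    rw [e, Matrix.mulVec_add]
    have h1 := slr_enr_add_le (A *ᵥ Q0) (A *ᵥ h)
    nlinarith [sq_nonneg (enr (A *ᵥ h) - lam)]
  have hneg : ∀ h : κ → ℝ, ipr W (A *ᵥ (-h)) = - ipr W (A *ᵥ h) := by
    intro h; rw [slr_ipr, slr_ipr, Matrix.mulVec_neg, dotProduct_neg]
  have hneg2 : ∀ h : κ → ℝ, enr (A *ᵥ (-h)) ^ 2 = enr (A *ᵥ h) ^ 2 := by
    intro h; rw [slr_enr_sq, slr_enr_sq, Matrix.mulVec_neg, dotProduct_neg, neg_dotProduct, neg_neg]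
  have hsum : ∀ h : κ → ℝ, 2 * c * Real.exp (-1 * enr (A *ᵥ h) ^ 2) ≤
      slr_f A lam Y (Q0 + h) + slr_f A lam Y (Q0 - h) := by
    intro h
    have h1 := hpt h
    have h2 := hpt (-h)
    rw [hneg, hneg2, ← sub_eq_add_neg] at h2
    have h3 : 2 ≤ Real.exp (ipr W (A *ᵥ h)) + Real.exp (-ipr W (A *ᵥ h)) := by
      linarith [Real.add_one_le_exp (ipr W (A *ᵥ h)), Real.add_one_le_exp (-ipr W (A *ᵥ h))]
    have h4 : 0 < c * Real.exp (-1 * enr (A *ᵥ h) ^ 2) := by positivity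
    nlinarith
  have hI1 : Integrable fun h => slr_f A lam Y (Q0 + h) := hI.comp_add_left Q0
  have hI2 : Integrable fun h => slr_f A lam Y (Q0 - h) := hI.comp_sub_left Q0
  have hint : 2 * c * ∫ h : κ → ℝ, Real.exp (-1 * enr (A *ᵥ h) ^ 2) ≤
      2 * ∫ Q, slr_f A lam Y Q := by
    rw [← integral_const_mul]
    refine (integral_mono (hg.const_mul _) (hI1.add hI2) hsum).trans ?_
    simp only [Pi.add_apply]
    rw [integral_add hI1 hI2, integral_add_left_eq_self (fun h => slr_f A lam Y h),
      integral_sub_left_eq_self (fun h => slr_f A lam Y h)]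
    linarith
  have hpi : 0 < √π := Real.sqrt_pos.2 Real.pi_pos
  rw [div_one] at hg2
  have hpp : 0 < √π ^ Fintype.card κ := pow_pos hpi _
  rw [div_pow]
  have hs := Real.sqrt_nonneg (gramDet A)
  have key : c * √π ^ Fintype.card κ ≤ √(gramDet A) * ∫ Q, slr_f A lam Y Q := by
    rw [← hg2]
    nlinarith
  calc lam ^ Fintype.card κ * c = lam ^ Fintype.card κ / √π ^ Fintype.card κ * (c * √π ^ Fintype.card κ) := by
        field_simp
    _ ≤ lam ^ Fintype.card κ / √π ^ Fintype.card κ * (√(gramDet A) * ∫ Q, slr_f A lam Y Q) :=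
        mul_le_mul_of_nonneg_left key (by positivity)
    _ = _ := by ring

lemma slr_upper {N κ : Type*} [Fintype N] [Fintype κ] [DecidableEq κ] (A : Matrix N κ ℝ)
    (hA : 0 < gramDet A) (lam : ℝ) (hl : 0 < lam) (W y0 : N → ℝ) (U : Set (κ → ℝ))
    (hU : MeasurableSet U) (R τ : ℝ) (hR : ∀ Q ∈ U, R ≤ enr (A *ᵥ Q - y0) ^ 2)
    (hτ : ∀ Q, ipr W (A *ᵥ Q - y0) ≤ τ * enr (A *ᵥ Q - y0)) :
    Real.sqrt (gramDet A) * (lam / Real.sqrt π) ^ Fintype.card κ *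
      ∫ Q in U, slr_f A lam (fun t => y0 t + W t) Q ≤
    (lam * √8) ^ Fintype.card κ *
      Real.exp (-(1/2) * enr W ^ 2 - lam * enr y0 + (τ + lam) ^ 2 - R / 8) := by
  set Y : N → ℝ := fun t => y0 t + W t with hY
  set c : ℝ := Real.exp (-(1/2) * enr W ^ 2 - lam * enr y0 + (τ + lam) ^ 2 - R / 8) with hc
  have hI := slr_f_int A hA lam hl Y
  obtain ⟨hg, hg2⟩ := slr_gauss_shift A hA (1/8) (by norm_num) y0
  have hpt : ∀ Q ∈ U, slr_f A lam Y Q ≤ c * Real.exp (-(1/8) * enr (A *ᵥ Q - y0) ^ 2) := by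
    intro Q hQ
    rw [hc, ← Real.exp_add, slr_f, hY]
    apply Real.exp_le_exp.2
    rw [slr_expand]
    have h1 : enr y0 ≤ enr (A *ᵥ Q) + enr (A *ᵥ Q - y0) := by
      have := slr_enr_add_le (A *ᵥ Q) (-(A *ᵥ Q - y0))
      have e : enr (-(A *ᵥ Q - y0)) = enr (A *ᵥ Q - y0) := by
        unfold enr; simp only [Pi.neg_apply, neg_sq]
      rw [e] at this
      have e2 : A *ᵥ Q + -(A *ᵥ Q - y0) = y0 := by abel
      rwa [e2] at this
    have h2 := hR Q hQ
    have h3 := hτ Q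
    have h4 := mul_le_mul_of_nonneg_left h1 hl.le
    have h5 := sq_nonneg (enr (A *ᵥ Q - y0) / 2 - (τ + lam))
    nlinarith
  have hint : ∫ Q in U, slr_f A lam Y Q ≤ c * ∫ Q, Real.exp (-(1/8) * enr (A *ᵥ Q - y0) ^ 2) := by
    rw [← integral_const_mul]
    refine (setIntegral_mono_on hI.integrableOn (hg.const_mul c).integrableOn hU hpt).trans ?_
    exact setIntegral_le_integral (hg.const_mul c) (Filter.Eventually.of_forall fun Q => by
      have : 0 < c := Real.exp_pos _
      simp only [Pi.zero_apply]; positivity)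
  have hpi : 0 < √π := Real.sqrt_pos.2 Real.pi_pos
  have hc0 : 0 < c := Real.exp_pos _
  have e8 : √(π / (1/8)) = √π * √8 := by
    rw [← Real.sqrt_mul Real.pi_pos.le]; congr 1; ring
  rw [e8] at hg2
  have hs := Real.sqrt_nonneg (gramDet A)
  calc √(gramDet A) * (lam / √π) ^ Fintype.card κ * ∫ Q in U, slr_f A lam Y Q
      ≤ √(gramDet A) * (lam / √π) ^ Fintype.card κ *
          (c * ∫ Q, Real.exp (-(1/8) * enr (A *ᵥ Q - y0) ^ 2)) :=
        mul_le_mul_of_nonneg_left hint (by positivity)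
    _ = ((lam / √π) ^ Fintype.card κ * c) *
          (√(gramDet A) * ∫ Q, Real.exp (-(1/8) * enr (A *ᵥ Q - y0) ^ 2)) := by ring
    _ ≤ ((lam / √π) ^ Fintype.card κ * c) * (√π * √8) ^ Fintype.card κ :=
        mul_le_mul_of_nonneg_left hg2 (by positivity)
    _ = ((lam / √π) * (√π * √8)) ^ Fintype.card κ * c := by rw [mul_pow (lam / √π)]; ring
    _ = _ := by congr 2; field_simp

lemma slr_mulVec {n p : ℕ} (X : Matrix (Fin n) (Fin p) ℝ) (S : Finset (Fin p)) (Q : S → ℝ) :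
    X *ᵥ sparseVec S Q = colSub X S *ᵥ Q := by
  funext i
  simp only [Matrix.mulVec, dotProduct, colSub, sparseVec]
  rw [← Finset.sum_subset (Finset.subset_univ S), ← Finset.sum_coe_sort S]
  · refine Finset.sum_congr rfl fun j _ => ?_
    simp
  · intro j _ hj
    simp [hj]

noncomputable def slr_w {n p : ℕ} (X : Matrix (Fin n) (Fin p) ℝ) (D : ℝ) (S : Finset (Fin p)) : ℝ :=
  (if S.Nonempty ∧ 0 < gramDet (colSub X S) then 1 else 0) *
        Real.exp (-2 * D * S.card * Real.log (Real.exp 1 * p / S.card)) *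
        ((Finset.univ.filter fun S' : Finset (Fin p) =>
            S'.card = S.card ∧ 0 < gramDet (colSub X S')).card : ℝ)⁻¹

lemma slr_post_eq (n p : ℕ) (X : Matrix (Fin n) (Fin p) ℝ) (D lam : ℝ)
    (Y : Fin n → ℝ) (SS : Set (Finset (Fin p))) (U : Set (Fin p → ℝ)) :
    slrPost n p X D lam Y SS U =
    (∑ S : Finset (Fin p), (if S ∈ SS then slr_w X D S else 0) *
      (√(gramDet (colSub X S)) * (lam / √π) ^ Fintype.card S *
        ∫ Q in {Q : S → ℝ | sparseVec S Q ∈ U}, slr_f (colSub X S) lam Y Q)) /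
    (∑ S : Finset (Fin p), slr_w X D S *
      (√(gramDet (colSub X S)) * (lam / √π) ^ Fintype.card S *
        ∫ Q : S → ℝ, slr_f (colSub X S) lam Y Q)) := by
  simp only [slrPost, gpostP, slr_w, slr_f, mul_assoc]

lemma slr_w_nonneg {n p : ℕ} (X : Matrix (Fin n) (Fin p) ℝ) (D : ℝ) (S : Finset (Fin p)) :
    0 ≤ slr_w X D S := by
  unfold slr_w
  split_ifs <;> positivity

lemma slr_w_zero {n p : ℕ} (X : Matrix (Fin n) (Fin p) ℝ) (D : ℝ) (S : Finset (Fin p))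
    (h : ¬ (S.Nonempty ∧ 0 < gramDet (colSub X S))) : slr_w X D S = 0 := by
  unfold slr_w
  rw [if_neg h]; ring

lemma slr_w_le {n p : ℕ} (X : Matrix (Fin n) (Fin p) ℝ) (D : ℝ) (S : Finset (Fin p)) :
    slr_w X D S ≤ Real.exp (-2 * D * slr_g p S.card) := by
  have e : -2 * D * (S.card : ℝ) * Real.log (Real.exp 1 * p / S.card) = -2 * D * slr_g p S.card := by
    rw [slr_g]; ring
  unfold slr_w
  rw [e]
  have h2 : ∀ k : ℕ, (k : ℝ)⁻¹ ≤ 1 := Nat.cast_inv_le_one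
  have h3 := h2 (Finset.univ.filter fun S' : Finset (Fin p) =>
            S'.card = S.card ∧ 0 < gramDet (colSub X S')).card
  have h4 : (0 : ℝ) ≤ ((Finset.univ.filter fun S' : Finset (Fin p) =>
            S'.card = S.card ∧ 0 < gramDet (colSub X S')).card : ℝ)⁻¹ := by positivity
  split_ifs
  · rw [one_mul]
    exact mul_le_of_le_one_right (Real.exp_nonneg _) h3
  · rw [zero_mul, zero_mul]; exact Real.exp_nonneg _

lemma slr_w_ge {n p : ℕ} (X : Matrix (Fin n) (Fin p) ℝ) (D : ℝ) (S : Finset (Fin p))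
    (hS : S.Nonempty) (h : 0 < gramDet (colSub X S)) :
    Real.exp (-2 * D * slr_g p S.card - slr_g p S.card) ≤ slr_w X D S := by
  have e : -2 * D * (S.card : ℝ) * Real.log (Real.exp 1 * p / S.card) = -2 * D * slr_g p S.card := by
    rw [slr_g]; ring
  unfold slr_w
  rw [e, if_pos ⟨hS, h⟩, one_mul, sub_eq_add_neg, Real.exp_add]
  refine mul_le_mul_of_nonneg_left ?_ (Real.exp_nonneg _)
  have hSp : S.card ≤ p := by simpa using Finset.card_le_univ S
  rw [Real.exp_neg]
  apply inv_anti₀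
  · have : S ∈ Finset.univ.filter fun S' : Finset (Fin p) =>
            S'.card = S.card ∧ 0 < gramDet (colSub X S') := by simp [h]
    exact_mod_cast Finset.card_pos.2 ⟨S, this⟩
  · refine le_trans ?_ (slr_choose (Finset.card_pos.2 hS) hSp)
    have : (Finset.univ.filter fun S' : Finset (Fin p) =>
            S'.card = S.card ∧ 0 < gramDet (colSub X S')) ⊆
          Finset.powersetCard S.card (Finset.univ : Finset (Fin p)) := by
      intro S' hS'
      rw [Finset.mem_powersetCard]
      exact ⟨Finset.subset_univ _, (Finset.mem_filter.1 hS').2.1⟩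
    have := Finset.card_le_card this
    rw [Finset.card_powersetCard, Finset.card_univ, Fintype.card_fin] at this
    exact_mod_cast this

lemma slr_term_nonneg {n p : ℕ} (X : Matrix (Fin n) (Fin p) ℝ) (lam : ℝ) (hl : 0 < lam)
    (Y : Fin n → ℝ) (S : Finset (Fin p)) (V : Set (S → ℝ)) :
    0 ≤ √(gramDet (colSub X S)) * (lam / √π) ^ Fintype.card S *
        ∫ Q in V, slr_f (colSub X S) lam Y Q := by
  have : 0 ≤ ∫ Q in V, slr_f (colSub X S) lam Y Q :=
    integral_nonneg fun Q => (slr_f_pos _ _ _ _).le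
  positivity

lemma slr_term_mono {n p : ℕ} (X : Matrix (Fin n) (Fin p) ℝ) (D lam : ℝ) (hl : 0 < lam)
    (Y : Fin n → ℝ) (SS : Set (Finset (Fin p))) (S : Finset (Fin p)) (V : Set (S → ℝ)) :
    (if S ∈ SS then slr_w X D S else 0) *
      (√(gramDet (colSub X S)) * (lam / √π) ^ Fintype.card S *
        ∫ Q in V, slr_f (colSub X S) lam Y Q) ≤
    slr_w X D S *
      (√(gramDet (colSub X S)) * (lam / √π) ^ Fintype.card S *
        ∫ Q : S → ℝ, slr_f (colSub X S) lam Y Q) := by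
  by_cases h : S.Nonempty ∧ 0 < gramDet (colSub X S)
  · have h1 : ∫ Q in V, slr_f (colSub X S) lam Y Q ≤ ∫ Q : S → ℝ, slr_f (colSub X S) lam Y Q :=
      setIntegral_le_integral (slr_f_int _ h.2 lam hl Y)
        (Filter.Eventually.of_forall fun Q => (slr_f_pos _ _ _ _).le)
    have h2 : (if S ∈ SS then slr_w X D S else 0) ≤ slr_w X D S := by
      split_ifs
      · exact le_rfl
      · exact slr_w_nonneg _ _ _
    refine mul_le_mul h2 ?_ (slr_term_nonneg X lam hl Y S V) (slr_w_nonneg _ _ _)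
    exact mul_le_mul_of_nonneg_left h1 (by positivity)
  · rw [slr_w_zero X D S h]; simp

lemma slr_post_nonneg (n p : ℕ) (X : Matrix (Fin n) (Fin p) ℝ) (D lam : ℝ) (hl : 0 < lam)
    (Y : Fin n → ℝ) (SS : Set (Finset (Fin p))) (U : Set (Fin p → ℝ)) :
    0 ≤ slrPost n p X D lam Y SS U := by
  rw [slr_post_eq]
  refine div_nonneg (Finset.sum_nonneg fun S _ => ?_) (Finset.sum_nonneg fun S _ => ?_)
  · refine mul_nonneg ?_ (slr_term_nonneg X lam hl Y S _)
    split_ifs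
    · exact slr_w_nonneg _ _ _
    · exact le_rfl
  · refine mul_nonneg (slr_w_nonneg _ _ _) ?_
    have := slr_term_nonneg X lam hl Y S Set.univ
    rwa [setIntegral_univ] at this

lemma slr_post_le_one (n p : ℕ) (X : Matrix (Fin n) (Fin p) ℝ) (D lam : ℝ) (hl : 0 < lam)
    (Y : Fin n → ℝ) (SS : Set (Finset (Fin p))) (U : Set (Fin p → ℝ)) :
    slrPost n p X D lam Y SS U ≤ 1 := by
  rw [slr_post_eq]
  refine div_le_one_of_le₀ (Finset.sum_le_sum fun S _ => slr_term_mono X D lam hl Y SS S _)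
    (Finset.sum_nonneg fun S _ => ?_)
  refine mul_nonneg (slr_w_nonneg _ _ _) ?_
  have := slr_term_nonneg X lam hl Y S Set.univ
  rwa [setIntegral_univ] at this

lemma slr_bound {n p : ℕ} (X : Matrix (Fin n) (Fin p) ℝ) (D lam ρ : ℝ) (hl : 0 < lam) (hρ : 0 < ρ)
    (βs : Fin p → ℝ) (Ss : Finset (Fin p)) (hSs : ∀ j, j ∉ Ss → βs j = 0) (hs1 : 1 ≤ Ss.card)
    (hdet : 0 < gramDet (colSub X Ss)) (W : Fin n → ℝ)
    (hgood : ∀ S : Finset (Fin p), S.Nonempty → ∀ Q : S → ℝ,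
      ipr W (colSub X S *ᵥ Q - X *ᵥ βs) ≤
        2 * slr_t p ρ (slr_g p Ss.card) S * enr (colSub X S *ᵥ Q - X *ᵥ βs))
    (SS : Set (Finset (Fin p))) (U : Set (Fin p → ℝ)) (R : ℝ)
    (hU : ∀ S : Finset (Fin p), MeasurableSet {Q : S → ℝ | sparseVec S Q ∈ U})
    (hR : ∀ β ∈ U, R ≤ enr (X *ᵥ β - X *ᵥ βs) ^ 2)
    (hexp : ∀ S ∈ SS, S.Nonempty →
      -2 * D * (slr_g p S.card - slr_g p Ss.card) +
        (64 / ρ + 3 * lam ^ 2 + |Real.log lam| + 2) * (slr_g p S.card + slr_g p Ss.card) - R / 8 ≤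
        -2 * slr_g p S.card - 2 * slr_g p Ss.card) :
    slrPost n p X D lam (fun i => X.mulVec βs i + W i) SS U ≤
      Real.exp (-2 * slr_g p Ss.card) := by
  set L := slr_g p Ss.card with hL
  set Y : Fin n → ℝ := fun i => X.mulVec βs i + W i with hY
  set Λ := |Real.log lam| with hΛ
  have hΛ0 : 0 ≤ Λ := abs_nonneg _
  have hSsp : Ss.card ≤ p := by simpa using Finset.card_le_univ Ss
  have hLs := slr_g_ge hs1 hSsp
  have hs1' : (1 : ℝ) ≤ Ss.card := by exact_mod_cast hs1
  have hL1 : 1 ≤ L := by linarith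
  set c : ℝ := -(1/2) * enr W ^ 2 - lam * enr (X *ᵥ βs) with hc
  have hlamexp : lam = Real.exp (Real.log lam) := (Real.exp_log hl).symm
  -- denominator
  have hden : Real.exp (-2 * D * L - L - Λ * L + c - lam ^ 2 / 2) ≤
      ∑ S : Finset (Fin p), slr_w X D S *
      (√(gramDet (colSub X S)) * (lam / √π) ^ Fintype.card S *
        ∫ Q : S → ℝ, slr_f (colSub X S) lam Y Q) := by
    have hone : Real.exp (-2 * D * L - L - Λ * L + c - lam ^ 2 / 2) ≤ slr_w X D Ss *
      (√(gramDet (colSub X Ss)) * (lam / √π) ^ Fintype.card Ss *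
        ∫ Q : Ss → ℝ, slr_f (colSub X Ss) lam Y Q) := by
      have hβ : βs = sparseVec Ss (fun j => βs j) := by
        funext j
        by_cases hj : j ∈ Ss
        · simp [sparseVec, hj]
        · simp [sparseVec, hj, hSs j hj]
      have hXβ : X *ᵥ βs = colSub X Ss *ᵥ (fun j => βs j) := by
        conv_lhs => rw [hβ]
        exact slr_mulVec X Ss _
      have h1 := slr_lower (colSub X Ss) hdet lam hl W (fun j => βs j)
      rw [← hXβ] at h1
      have h2 := slr_w_ge X D Ss (Finset.card_pos.1 hs1) hdet
      have h3 : Real.exp (-Λ * L) ≤ lam ^ Fintype.card Ss := by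
        rw [Fintype.card_coe]
        conv_rhs => rw [hlamexp, ← Real.exp_nat_mul]
        apply Real.exp_le_exp.2
        have : -Λ ≤ Real.log lam := neg_abs_le _
        nlinarith
      calc Real.exp (-2 * D * L - L - Λ * L + c - lam ^ 2 / 2)
          = Real.exp (-2 * D * L - L) * (Real.exp (-Λ * L) * Real.exp (c - lam ^ 2 / 2)) := by
            rw [← Real.exp_add, ← Real.exp_add]; congr 1; ring
        _ ≤ slr_w X D Ss * (lam ^ Fintype.card Ss * Real.exp (c - lam ^ 2 / 2)) := by
            refine mul_le_mul h2 ?_ (by positivity) (slr_w_nonneg _ _ _)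
            exact mul_le_mul_of_nonneg_right h3 (Real.exp_nonneg _)
        _ ≤ _ := mul_le_mul_of_nonneg_left h1 (slr_w_nonneg _ _ _)
    refine hone.trans (Finset.single_le_sum (f := fun S : Finset (Fin p) => slr_w X D S *
      (√(gramDet (colSub X S)) * (lam / √π) ^ Fintype.card S *
        ∫ Q : S → ℝ, slr_f (colSub X S) lam Y Q)) (fun S _ => ?_) (Finset.mem_univ Ss))
    refine mul_nonneg (slr_w_nonneg _ _ _) ?_
    have := slr_term_nonneg X lam hl Y S Set.univ
    rwa [setIntegral_univ] at this
  set d0 := Real.exp (-2 * D * L - L - Λ * L + c - lam ^ 2 / 2) with hd0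
  have hd0pos : 0 < d0 := Real.exp_pos _
  have hnum : ∀ S : Finset (Fin p), (if S ∈ SS then slr_w X D S else 0) *
      (√(gramDet (colSub X S)) * (lam / √π) ^ Fintype.card S *
        ∫ Q in {Q : S → ℝ | sparseVec S Q ∈ U}, slr_f (colSub X S) lam Y Q) ≤
      (Real.exp (-2 * L) * d0) * (if S.Nonempty then Real.exp (-2 * slr_g p S.card) else 0) := by
    intro S
    have hrhs : 0 ≤ (Real.exp (-2 * L) * d0) *
        (if S.Nonempty then Real.exp (-2 * slr_g p S.card) else 0) := by
      split_ifs <;> positivity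
    by_cases hSS : S ∈ SS
    swap
    · rw [if_neg hSS, zero_mul]; exact hrhs
    by_cases h : S.Nonempty ∧ 0 < gramDet (colSub X S)
    swap
    · rw [if_pos hSS, slr_w_zero X D S h, zero_mul]; exact hrhs
    rw [if_pos hSS, if_pos h.1]
    have hS1 : 1 ≤ S.card := Finset.card_pos.2 h.1
    have hSp : S.card ≤ p := by simpa using Finset.card_le_univ S
    have hg := slr_g_ge hS1 hSp
    have hS1' : (1 : ℝ) ≤ S.card := by exact_mod_cast hS1
    have hup := slr_upper (colSub X S) h.2 lam hl W (X *ᵥ βs) {Q : S → ℝ | sparseVec S Q ∈ U}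
      (hU S) R (2 * slr_t p ρ L S) (by
        intro Q hQ
        rw [← slr_mulVec]
        exact hR _ hQ) (hgood S h.1)
    have ht : slr_t p ρ L S ^ 2 = 8 / ρ * (slr_g p S.card + L) := by
      apply Real.sq_sqrt
      have : 0 < slr_g p S.card + L := by linarith
      positivity
    have h64 : (2 * slr_t p ρ L S + lam) ^ 2 ≤ 64 / ρ * (slr_g p S.card + L) + 2 * lam ^ 2 := by
      have : 64 / ρ * (slr_g p S.card + L) = 8 * slr_t p ρ L S ^ 2 := by rw [ht]; ring
      rw [this]
      nlinarith [sq_nonneg (2 * slr_t p ρ L S - lam)]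
    have h8 : (lam * √8) ^ Fintype.card S ≤ Real.exp ((Λ + 2) * slr_g p S.card) := by
      rw [Fintype.card_coe]
      have h8a : √8 ≤ Real.exp 2 := by
        have : √8 ≤ 3 := by
          rw [Real.sqrt_le_left (by norm_num)]; norm_num
        linarith [Real.add_one_le_exp (2 : ℝ)]
      have h8b : lam ≤ Real.exp Λ := by
        conv_lhs => rw [hlamexp]
        exact Real.exp_le_exp.2 (le_abs_self _)
      calc (lam * √8) ^ S.card ≤ (Real.exp Λ * Real.exp 2) ^ S.card :=
            pow_le_pow_left₀ (by positivity) (mul_le_mul h8b h8a (by positivity) (by positivity)) _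
        _ = Real.exp (S.card * (Λ + 2)) := by rw [← Real.exp_add, Real.exp_nat_mul]
        _ ≤ _ := by
          apply Real.exp_le_exp.2
          nlinarith
    have hw := slr_w_le X D S
    have hE := hexp S hSS h.1
    calc _ ≤ Real.exp (-2 * D * slr_g p S.card) * (Real.exp ((Λ + 2) * slr_g p S.card) *
          Real.exp (c + (2 * slr_t p ρ L S + lam) ^ 2 - R / 8)) := by
          refine mul_le_mul hw (hup.trans ?_) (slr_term_nonneg X lam hl Y S _) (Real.exp_nonneg _)
          exact mul_le_mul_of_nonneg_right h8 (Real.exp_nonneg _)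
      _ ≤ _ := by
          rw [hd0, ← Real.exp_add, ← Real.exp_add, ← Real.exp_add, ← Real.exp_add]
          apply Real.exp_le_exp.2
          have e1 : 0 ≤ lam ^ 2 * (L - 1) := mul_nonneg (sq_nonneg _) (by linarith)
          have e2 : 0 ≤ lam ^ 2 * slr_g p S.card := mul_nonneg (sq_nonneg _) (by linarith)
          nlinarith
  rw [slr_post_eq, div_le_iff₀ (lt_of_lt_of_le hd0pos hden)]
  refine (Finset.sum_le_sum fun S _ => hnum S).trans ?_
  rw [← Finset.mul_sum]
  have hsum := slr_sum p
  calc _ ≤ Real.exp (-2 * L) * d0 * 1 := mul_le_mul_of_nonneg_left hsum (by positivity)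
    _ = Real.exp (-2 * L) * d0 := mul_one _
    _ ≤ _ := mul_le_mul_of_nonneg_left hden (Real.exp_nonneg _)

lemma slr_integral {Ω : Type} [MeasurableSpace Ω] (P : Measure Ω) [IsProbabilityMeasure P]
    (f : Ω → ℝ) (hf0 : ∀ ω, 0 ≤ f ω) (hf1 : ∀ ω, f ω ≤ 1) (N : Set Ω) (L : ℝ) (hL : 1 ≤ L)
    (hN : P N ≤ ENNReal.ofReal (Real.exp (-2 * L))) (hf : ∀ ω, ω ∉ N → f ω ≤ Real.exp (-2 * L)) :
    ∫ ω, f ω ∂P ≤ Real.exp (-L) := by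
  have hm : MeasurableSet (toMeasurable P N) := measurableSet_toMeasurable _ _
  have hint1 : Integrable ((toMeasurable P N).indicator fun _ => (1 : ℝ)) P :=
    (integrable_const 1).indicator hm
  have hle : ∫ ω, f ω ∂P ≤ ∫ ω, ((toMeasurable P N).indicator (fun _ => (1 : ℝ)) ω +
      Real.exp (-2 * L)) ∂P := by
    refine integral_mono_of_nonneg (Filter.Eventually.of_forall hf0)
      (hint1.add (integrable_const _)) (Filter.Eventually.of_forall fun ω => ?_)
    by_cases hω : ω ∈ toMeasurable P N
    · simp only [Set.indicator_of_mem hω]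
      linarith [hf1 ω, Real.exp_pos (-2 * L)]
    · simp only [Set.indicator_of_notMem hω, zero_add]
      exact hf ω fun h => hω (subset_toMeasurable P N h)
  rw [integral_add hint1 (integrable_const _), integral_indicator_const _ hm] at hle
  have hreal : P.real (toMeasurable P N) ≤ Real.exp (-2 * L) := by
    rw [measureReal_def, measure_toMeasurable]
    exact ENNReal.toReal_le_of_le_ofReal (Real.exp_nonneg _) hN
  simp only [smul_eq_mul, mul_one, integral_const, probReal_univ, one_mul] at hle
  have h2 : 2 * Real.exp (-2 * L) ≤ Real.exp (-L) := by
    have : Real.exp (-L) = Real.exp L * Real.exp (-2 * L) := by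
      rw [← Real.exp_add]; congr 1; ring
    rw [this]
    exact mul_le_mul_of_nonneg_right (by linarith [Real.add_one_le_exp L]) (Real.exp_nonneg _)
  linarith

/-- Corollary 4 (sparse linear regression, prediction): assumption-free posterior
contraction at the minimax prediction rate `s* log(ep/s*)`, together with the dimension
bound `|S| ≤ (1+δ)s*` under the posterior. -/
theorem slr_prediction :
    ∀ lam ρ : ℝ, 0 < lam → 0 < ρ →
    ∃ δ₀ : ℝ, 0 < δ₀ ∧ δ₀ ≤ 1 ∧ ∀ δ : ℝ, 0 < δ → δ < δ₀ →
    ∃ D₀ : ℝ, 0 < D₀ ∧ ∀ D : ℝ, D₀ < D →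
    ∃ M C' C'' : ℝ, 0 < M ∧ 0 < C' ∧ 0 < C'' ∧
    ∀ (n p : ℕ) (X : Matrix (Fin n) (Fin p) ℝ) (βs : Fin p → ℝ),
      0 < gramDet (colSub X (Finset.univ.filter fun j => βs j ≠ 0)) →
    ∀ (Ω : Type) (_ : MeasurableSpace Ω) (P : Measure Ω) (_ : IsProbabilityMeasure P)
      (W : Ω → Fin n → ℝ), subG P ρ W →
    (∫ ω, slrPost n p X D lam (fun i => X.mulVec βs i + W ω i)
          {S : Finset (Fin p) |
            (1 + δ) * ((Finset.univ.filter fun j => βs j ≠ 0).card : ℝ) < (S.card : ℝ)}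
          Set.univ ∂P
        ≤ Real.exp (-C' * ((Finset.univ.filter fun j => βs j ≠ 0).card : ℝ) *
            Real.log (Real.exp 1 * p /
              ((Finset.univ.filter fun j => βs j ≠ 0).card : ℝ)))) ∧
    (∫ ω, slrPost n p X D lam (fun i => X.mulVec βs i + W ω i) Set.univ
          {β : Fin p → ℝ |
            M * ((Finset.univ.filter fun j => βs j ≠ 0).card : ℝ) *
                Real.log (Real.exp 1 * p /
                  ((Finset.univ.filter fun j => βs j ≠ 0).card : ℝ))
              < (enr fun i => X.mulVec β i - X.mulVec βs i) ^ 2} ∂P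
        ≤ Real.exp (-C'' * ((Finset.univ.filter fun j => βs j ≠ 0).card : ℝ) *
            Real.log (Real.exp 1 * p /
              ((Finset.univ.filter fun j => βs j ≠ 0).card : ℝ)))) := by
  intro lam ρ hl hρ
  refine ⟨1, one_pos, le_rfl, fun δ hδ _ => ?_⟩
  set B : ℝ := 64 / ρ + 3 * lam ^ 2 + |Real.log lam| + 2 with hB
  have hB0 : 0 < B := by positivity
  set c : ℝ := 1 - (1 + Real.log (1 + δ)) / (1 + δ) with hc
  have hc0 : 0 < c := by
    have h1 := Real.log_lt_sub_one_of_pos (x := 1 + δ) (by linarith) (by linarith)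
    rw [hc, sub_pos, div_lt_one (by linarith)]
    linarith
  refine ⟨(B + 2) / c + B + 2, by positivity, fun D hD => ?_⟩
  have hDc : B + 2 ≤ D * c := by
    rw [← div_le_iff₀ hc0]; linarith
  have hDB : B + 2 ≤ D := by
    have : 0 < (B + 2) / c := by positivity
    linarith
  refine ⟨8 * (2 * D + B + 2), 1, 1, by linarith, one_pos, one_pos, ?_⟩
  intro n p X βs hdet Ω _ P _ W hW
  set Ss : Finset (Fin p) := Finset.univ.filter fun j => βs j ≠ 0 with hSs
  have hrhs : Real.exp (-1 * (Ss.card : ℝ) * Real.log (Real.exp 1 * p / (Ss.card : ℝ))) =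
      Real.exp (-slr_g p Ss.card) := by
    rw [slr_g]; congr 1; ring
  rw [hrhs]
  rcases Nat.eq_zero_or_pos Ss.card with h0 | hpos
  · have hg : slr_g p Ss.card = 0 := by rw [slr_g, h0]; simp
    rw [hg, neg_zero, Real.exp_zero]
    have key : ∀ SS U, ∫ ω, slrPost n p X D lam (fun i => X.mulVec βs i + W ω i) SS U ∂P ≤ 1 := by
      intro SS U
      have := integral_mono_of_nonneg (μ := P)
        (Filter.Eventually.of_forall fun ω => slr_post_nonneg n p X D lam hl
          (fun i => X.mulVec βs i + W ω i) SS U) (integrable_const (1 : ℝ))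
        (Filter.Eventually.of_forall fun ω => slr_post_le_one n p X D lam hl
          (fun i => X.mulVec βs i + W ω i) SS U)
      simpa using this
    exact ⟨key _ _, key _ _⟩
  have hs1 : 1 ≤ Ss.card := hpos
  have hSsp : Ss.card ≤ p := by simpa using Finset.card_le_univ Ss
  have hLs := slr_g_ge hs1 hSsp
  have hs1' : (1 : ℝ) ≤ Ss.card := by exact_mod_cast hs1
  have hSs0 : ∀ j, j ∉ Ss → βs j = 0 := by
    intro j hj
    by_contra h
    exact hj (by simp [hSs, h])
  have hev := slr_event X βs ρ hρ Ss hSs0 hs1 P W hW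
  have hgnn : ∀ S : Finset (Fin p), S.Nonempty → 0 ≤ slr_g p S.card := by
    intro S hS
    have := slr_g_ge (Finset.card_pos.2 hS) (by simpa using Finset.card_le_univ S : S.card ≤ p)
    have : (0 : ℝ) ≤ S.card := by positivity
    linarith
  constructor
  · refine slr_integral P _ (fun ω => slr_post_nonneg _ _ _ _ _ hl _ _ _)
      (fun ω => slr_post_le_one _ _ _ _ _ hl _ _ _) _ _ (by linarith) hev (fun ω hω => ?_)
    refine slr_bound X D lam ρ hl hρ βs Ss hSs0 hs1 hdet (W ω) ?_ _ _ 0 ?_ ?_ ?_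
    · intro S hS Q
      by_contra hcon
      exact hω ⟨S, hS, Q, not_le.1 hcon⟩
    · intro S; simp
    · intro β _; positivity
    · intro S hS hSne
      have hgap := slr_gap (p := p) hδ hs1 (by simpa using Finset.card_le_univ S : S.card ≤ p) hS
      have hg0 := hgnn S hSne
      rw [← hB]
      have e : (1 + Real.log (1 + δ)) / (1 + δ) = 1 - c := by rw [hc]; ring
      rw [e] at hgap
      have h1 : slr_g p Ss.card ≤ slr_g p S.card := by nlinarith
      have h2 : D * (c * slr_g p S.card) ≤ D * (slr_g p S.card - slr_g p Ss.card) :=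
        mul_le_mul_of_nonneg_left (by linarith) (by linarith)
      have h3 : (B + 2) * slr_g p S.card ≤ D * c * slr_g p S.card :=
        mul_le_mul_of_nonneg_right hDc hg0
      have h4 : B * slr_g p Ss.card ≤ B * slr_g p S.card := mul_le_mul_of_nonneg_left h1 hB0.le
      nlinarith
  · refine slr_integral P _ (fun ω => slr_post_nonneg _ _ _ _ _ hl _ _ _)
      (fun ω => slr_post_le_one _ _ _ _ _ hl _ _ _) _ _ (by linarith) hev (fun ω hω => ?_)
    refine slr_bound X D lam ρ hl hρ βs Ss hSs0 hs1 hdet (W ω) ?_ _ _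
      (8 * (2 * D + B + 2) * slr_g p Ss.card) ?_ ?_ ?_
    · intro S hS Q
      by_contra hcon
      exact hω ⟨S, hS, Q, not_le.1 hcon⟩
    · intro S
      have hcont : Continuous fun Q : S → ℝ => enr (colSub X S *ᵥ Q - X *ᵥ βs) :=
        slr_enr_cont.comp (by fun_prop)
      have hset : MeasurableSet {Q : S → ℝ | 8 * (2 * D + B + 2) * (Ss.card : ℝ) *
          Real.log (Real.exp 1 * p / (Ss.card : ℝ)) < enr (colSub X S *ᵥ Q - X *ᵥ βs) ^ 2} :=
        (isOpen_lt continuous_const (hcont.pow 2)).measurableSet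
      convert hset using 3 with Q
      simp only [Set.mem_ofPred_eq]
      rw [← slr_mulVec]
      rfl
    · intro β hβ
      have hβ' : 8 * (2 * D + B + 2) * (Ss.card : ℝ) *
          Real.log (Real.exp 1 * p / (Ss.card : ℝ)) < enr (X *ᵥ β - X *ᵥ βs) ^ 2 := hβ
      rw [slr_g]
      linarith
    · intro S _ hSne
      have hg0 := hgnn S hSne
      rw [← hB]
      have h3 : (B + 2) * slr_g p S.card ≤ D * slr_g p S.card :=
        mul_le_mul_of_nonneg_right hDB hg0
      have h4 : 0 ≤ D * slr_g p S.card := mul_nonneg (by linarith) hg0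
      have h5 : 0 ≤ B * slr_g p S.card := mul_nonneg hB0.le hg0
      nlinarith
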